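/- Every smooth projective curve over a perfect field k has a dense affine open subscheme which is isomorphic to a smooth affine plane curve, i.e. to a smooth closed subscheme of A_k² defined by a single polynomial equation. -/

import Mathlib

open AlgebraicGeometry CategoryTheory Polynomial TopologicalSpace

noncomputable section

namespace BakerModels

/-- The ring of Laurent polynomials in two variables over `k`,
`k[x^{±1}, y^{±1}]`, realised as the monoid algebra of `ℤ × ℤ`. -/
abbrev LaurentPoly₂ (k : Type) [CommRing k] : Type := AddMonoidAlgebra k (ℤ × ℤ)

/-- A finitely supported coefficient function determines a Laurent polynomial. -/
def ofCoeffs {k : Type} [CommRing k] (f : (ℤ × ℤ) →₀ k) : LaurentPoly₂ k := .ofCoeff f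

/-- Base change of a Laurent polynomial along a ring homomorphism (applied to
the coefficients). -/
def mapLaurent {k K : Type} [CommRing k] [CommRing K] (φ : k →+* K)
    (f : LaurentPoly₂ k) : LaurentPoly₂ K :=
  ofCoeffs (Finsupp.mapRange φ φ.map_zero f.coeff)

/-- `Spec k`, the base scheme of a field (or commutative ring) `k`. -/
abbrev SpecOf (k : Type) [CommRing k] : Scheme := Spec (CommRingCat.of k)

/-- The affine curve `C₀ : f = 0` in the two–dimensional torus
`𝔾ₘ² = Spec k[x^{±1}, y^{±1}]`. -/
def torusCurve (k : Type) [CommRing k] (f : LaurentPoly₂ k) : Scheme :=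
  Spec (CommRingCat.of (LaurentPoly₂ k ⧸ Ideal.span {f}))

/-- The structure morphism of `torusCurve k f` over `Spec k`. -/
def torusCurveOver (k : Type) [CommRing k] (f : LaurentPoly₂ k) :
    torusCurve k f ⟶ SpecOf k :=
  Spec.map (CommRingCat.ofHom (algebraMap k (LaurentPoly₂ k ⧸ Ideal.span {f})))

/-- A (Noetherian) local ring is *regular* if its maximal ideal can be generated
by `dim R` many elements. -/
def IsRegularLocalRing (R : Type) [CommRing R] [IsLocalRing R] : Prop :=
  IsNoetherianRing R ∧
    ∃ s : Finset R, Ideal.span (s : Set R) = IsLocalRing.maximalIdeal R ∧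
      (s.card : WithBot (WithTop ℕ)) = ringKrullDim R

/-- A scheme is *regular at a point* if its stalk there is a regular local ring.
(Over a perfect base field this is the same as smoothness at the point.) -/
def RegularAt (X : Scheme) (x : X) : Prop :=
  IsRegularLocalRing (X.presheaf.stalk x)

/-- The regular locus `Reg X` of a scheme. -/
def regularLocus (X : Scheme) : Set X := {x | RegularAt X x}

/-- The singular locus `Sing X` of a scheme. -/
def singularLocus (X : Scheme) : Set X := {x | ¬ RegularAt X x}

/-- A scheme is regular if it is regular at all of its points. -/
def RegularScheme (X : Scheme) : Prop := ∀ x, RegularAt X x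

/-- A morphism of schemes is *birational* if it restricts to an isomorphism
over a dense open of the target. -/
def IsBirationalHom {X Y : Scheme} (f : X ⟶ Y) : Prop :=
  ∃ V : Y.Opens, Dense (V : Set Y) ∧ IsIso (f ∣_ V)

/-- Two schemes over a common base are *birational over the base* if they
contain isomorphic dense open subschemes (the isomorphism commuting with the
structure morphisms). -/
def AreBirationalOver {S X Y : Scheme} (φX : X ⟶ S) (φY : Y ⟶ S) : Prop :=
  ∃ (U : X.Opens) (V : Y.Opens) (e : U.toScheme ≅ V.toScheme),
    Dense (U : Set X) ∧ Dense (V : Set Y) ∧ e.hom ≫ V.ι ≫ φY = U.ι ≫ φX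

/-- A *curve* is an (equidimensional) scheme all of whose irreducible
components are one-dimensional. -/
def IsCurve (X : Scheme) : Prop :=
  ∀ T ∈ irreducibleComponents (X : Type), topologicalKrullDim T = 1

/-- A projective curve over a field `k` (a proper curve over `Spec k`). -/
structure ProjCurve (k : Type) [Field k] where
  X : Scheme
  structMap : X ⟶ SpecOf k
  isCurve : IsCurve X
  proper : IsProper structMap

/-- A smooth projective curve over a field `k`. -/
structure SmoothProjCurve (k : Type) [Field k] extends ProjCurve k where
  smooth : IsSmooth structMap



theorem exists_gen (F K : Type) [Field F] [Infinite F] [CommRing K] [Algebra F K]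
    [Algebra.Etale F K] : ∃ y : K, Function.Surjective (aeval (R := F) y) := by
  classical
  obtain ⟨I, _, Ai, _, _, e, hA⟩ := (Algebra.Etale.iff_exists_algEquiv_prod F K).mp inferInstance
  have hy : ∀ i, ∃ y : Ai i, Function.Surjective (aeval (R := F) y) := by
    intro i
    have := (hA i).1
    have := (hA i).2
    obtain ⟨y, hy⟩ := Field.exists_primitive_element F (Ai i)
    refine ⟨y, ?_⟩
    rw [← AlgHom.range_eq_top, ← Algebra.adjoin_singleton_eq_range_aeval]
    have h1 := IntermediateField.adjoin_simple_toSubalgebra_of_isAlgebraic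
      (Algebra.IsAlgebraic.isAlgebraic (R := F) y)
    rw [← h1, hy, IntermediateField.top_toSubalgebra]
  choose y hy using hy
  let D : Set F := {c | ∃ i j, aeval (y i - algebraMap F (Ai i) c) (minpoly F (y j)) = 0}
  have hD : D.Finite := by
    have : D = ⋃ i, ⋃ j, {c | aeval (y i - algebraMap F (Ai i) c) (minpoly F (y j)) = 0} := by
      ext; simp [D]
    rw [this]
    refine Set.finite_iUnion fun i => Set.finite_iUnion fun j => ?_
    have := (hA j).1
    have hne : minpoly F (y j) ≠ 0 := minpoly.ne_zero (Algebra.IsIntegral.isIntegral (R := F) (y j))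
    have hf := ((minpoly F (y j)).rootSet_finite (Ai i))
    refine (hf.preimage (f := fun c : F => y i - algebraMap F (Ai i) c) ?_).subset ?_
    · intro a _ b _ hab
      simpa using hab
    · intro c hc
      simp only [Set.mem_preimage, mem_rootSet]
      exact ⟨hne, hc⟩
  obtain ⟨c, -, hc⟩ := exists_seq_of_forall_finset_exists (α := F) (fun _ => True)
    (fun a b => a - b ∉ D ∧ b - a ∉ D) (by
      intro s _
      have hfin : (⋃ a ∈ s, ((fun b => a - b) ⁻¹' D ∪ (fun b => b - a) ⁻¹' D)).Finite := by
        refine s.finite_toSet.biUnion fun a _ => Set.Finite.union ?_ ?_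
        · exact hD.preimage (by intro x _ y _ h; simpa using h)
        · exact hD.preimage (by intro x _ y _ h; simpa using h)
      obtain ⟨b, hb⟩ := hfin.exists_notMem
      refine ⟨b, trivial, fun a ha => ?_⟩
      simp only [Set.mem_iUnion, not_exists, Set.mem_union, not_or] at hb
      exact hb a ha)
  obtain ⟨n, ⟨en⟩⟩ := Finite.exists_equiv_fin I
  let c' : I → F := fun i => c (en i)
  have hc' : ∀ i j, i ≠ j → c' i - c' j ∉ D := by
    intro i j hij
    have : (en i : ℕ) ≠ en j := fun h => hij (en.injective (Fin.ext h))
    rcases lt_or_gt_of_ne this with h | h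
    · exact (hc _ _ h).1
    · exact (hc _ _ h).2
  let z : ∀ i, Ai i := fun i => y i + algebraMap F (Ai i) (c' i)
  have hz : ∀ i, Function.Surjective (aeval (R := F) (z i)) := by
    intro i x
    obtain ⟨p, hp⟩ := hy i x
    refine ⟨p.comp (X - C (c' i)), ?_⟩
    simp [aeval_comp, z, hp]
  let J : I → Ideal F[X] := fun i => RingHom.ker (aeval (R := F) (z i))
  have hJm : ∀ i, (J i).IsMaximal := fun i => RingHom.ker_isMaximal_of_surjective _ (hz i)
  have hJ : Pairwise (Function.onFun IsCoprime J) := by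
    intro i j hij
    rw [Function.onFun, Ideal.isCoprime_iff_sup_eq]
    refine (hJm i).coprime_of_ne (hJm j) ?_
    intro hJJ
    have hmem : (minpoly F (y j)).comp (X - C (c' j)) ∈ J j := by
      change aeval (z j) _ = 0
      simp [aeval_comp, z]
    rw [← hJJ] at hmem
    apply hc' j i hij.symm
    refine ⟨i, j, ?_⟩
    have h2 : aeval (z i) ((minpoly F (y j)).comp (X - C (c' j))) = 0 := hmem
    rw [aeval_comp] at h2
    convert h2 using 2
    simp [z, sub_sub_eq_add_sub, add_sub_assoc]
  refine ⟨e.symm z, ?_⟩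
  intro x
  choose q hq using fun i => hz i (e x i)
  obtain ⟨p, hp⟩ := Ideal.exists_forall_sub_mem_ideal (I := J) hJ q
  refine ⟨p, ?_⟩
  apply e.injective
  rw [← AlgEquiv.coe_toAlgHom, ← aeval_algHom_apply]
  ext i
  have h3 := hp i
  have h4 : aeval (z i) (p - q i) = 0 := h3
  rw [map_sub, sub_eq_zero, hq i] at h4
  simp only [AlgEquiv.coe_toAlgHom, AlgEquiv.apply_symm_apply]
  rw [← h4]
  have := aeval_algHom_apply (Pi.evalAlgHom F Ai i) z p
  simpa using this.symm

theorem exists_den (R A : Type) [CommRing R] [IsDomain R] [CommRing A] [Algebra R A]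
    (x : TensorProduct R (FractionRing R) A) :
    ∃ s : R, s ≠ 0 ∧ ∃ a : A, s • x = Algebra.TensorProduct.includeRight a := by
  induction x with
  | zero => exact ⟨1, one_ne_zero, 0, by simp⟩
  | tmul f a =>
    obtain ⟨r, s, rfl⟩ := IsLocalization.exists_mk'_eq (nonZeroDivisors R) f
    refine ⟨s, nonZeroDivisors.coe_ne_zero s, r • a, ?_⟩
    rw [TensorProduct.smul_tmul', Algebra.TensorProduct.includeRight_apply, ← TensorProduct.smul_tmul]
    congr 1
    rw [Algebra.smul_def, Algebra.smul_def, mul_one, mul_comm, IsLocalization.mk'_spec]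
  | add x y hx hy =>
    obtain ⟨s, hs, a, ha⟩ := hx
    obtain ⟨t, ht, b, hb⟩ := hy
    refine ⟨s * t, mul_ne_zero hs ht, t • a + s • b, ?_⟩
    rw [smul_add, map_add, map_smul, map_smul, ← ha, ← hb, mul_comm, mul_smul, mul_comm, mul_smul]



theorem core (R A F K : Type) [CommRing R] [IsDomain R] [UniqueFactorizationMonoid R] [Infinite R]
    [CommRing A] [Algebra R A] [Field F] [Algebra R F] [IsFractionRing R F] [CommRing K]
    [Algebra R K] [Algebra F K] [IsScalarTower R F K] [Algebra.IsIntegral F K]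
    [Algebra.FiniteType R A]
    (ι : A →ₐ[R] K) (hι : Function.Injective ι)
    (hden : ∀ x : K, ∃ s : R, s ≠ 0 ∧ ∃ a : A, s • x = ι a)
    (hgen : ∃ y : K, Function.Surjective (aeval (R := F) y)) :
    ∃ (h : R) (G : R[X]), h ≠ 0 ∧ ∀ (L : Type) [CommRing L] [Algebra A L] [Algebra R L]
      [IsScalarTower R A L] [IsLocalization.Away (algebraMap R A h) L],
      Nonempty (L ≃ₐ[R] (R[X] ⧸ Ideal.span {G})) := by
  classical
  have hRF : Function.Injective (algebraMap R F) := IsFractionRing.injective R F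
  -- step 1: a generator in A with minpoly having nonzero constant term
  obtain ⟨y, hy, hm0⟩ : ∃ y : A, Function.Surjective (aeval (R := F) (ι y)) ∧
      (minpoly F (ι y)).eval 0 ≠ 0 := by
    obtain ⟨y0, hy0⟩ := hgen
    obtain ⟨s, hs, a, ha⟩ := hden y0
    have hmne : minpoly F (ι a) ≠ 0 := minpoly.ne_zero (Algebra.IsIntegral.isIntegral (R := F) (ι a))
    have hfin := ((minpoly F (ι a)).rootSet_finite F).preimage (f := algebraMap R F) hRF.injOn
    obtain ⟨r, hr⟩ := hfin.exists_notMem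
    have hr' : (minpoly F (ι a)).eval (algebraMap R F r) ≠ 0 := by
      intro h0
      apply hr
      simp only [Set.mem_preimage, mem_rootSet]
      exact ⟨hmne, by simpa using h0⟩
    have hsF : algebraMap R F s ≠ 0 := by simpa using hs
    have hιy : ι (a - algebraMap R A r) = ι a - algebraMap F K (algebraMap R F r) := by
      rw [map_sub, AlgHom.commutes, ← IsScalarTower.algebraMap_apply]
    refine ⟨a - algebraMap R A r, ?_, ?_⟩
    · intro x
      obtain ⟨p, hp⟩ := hy0 x
      refine ⟨p.comp (C (algebraMap R F s)⁻¹ * (X + C (algebraMap R F r))), ?_⟩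
      rw [aeval_comp, ← hp, hιy]
      congr 2
      simp only [map_mul, map_add, aeval_C, aeval_X, sub_add_cancel]
      rw [← ha, ← algebraMap_smul F s y0, Algebra.smul_def, ← mul_assoc, ← map_mul,
        inv_mul_cancel₀ hsF, map_one, one_mul]
    · rw [hιy, minpoly.sub_algebraMap]
      simpa using hr'
  -- step 2: integral equation
  obtain ⟨b, hb, hgb⟩ := IsLocalization.integerNormalization_spec (nonZeroDivisors R)
    (minpoly F (ι y))
  set g := IsLocalization.integerNormalization (nonZeroDivisors R) (minpoly F (ι y)) with hg
  have hb0 : algebraMap R F b ≠ 0 := by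
    simpa using nonZeroDivisors.ne_zero hb
  have hgb' : g.map (algebraMap R F) = C (algebraMap R F b) * minpoly F (ι y) := by
    rw [hgb, ← algebraMap_smul F b, smul_eq_C_mul]
  have hmap : ∀ (p : R[X]) (x : K), aeval x (p.map (algebraMap R F)) = aeval x p := by
    intro p x; exact aeval_map_algebraMap F x p
  have hgy : aeval y g = 0 := by
    apply hι
    rw [map_zero, ← aeval_algHom_apply, ← hmap, hgb', map_mul, minpoly.aeval, mul_zero]
  set a0 := g.coeff 0 with ha0
  have ha0' : a0 ≠ 0 := by
    intro h0
    have : (g.map (algebraMap R F)).eval 0 = 0 := by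
      rw [← coeff_zero_eq_eval_zero, coeff_map, ← ha0, h0, map_zero]
    rw [hgb', eval_mul, eval_C] at this
    exact (mul_ne_zero hb0 hm0) this
  -- step 3: common denominator
  obtain ⟨S, hS⟩ := Algebra.FiniteType.out (R := R) (A := A)
  have hden2 : ∀ a : A, ∃ d : R, d ≠ 0 ∧ ∃ q : R[X], d • a = aeval y q := by
    intro a
    obtain ⟨p, hp⟩ := hy (ι a)
    obtain ⟨d, hd, hq⟩ := IsLocalization.integerNormalization_spec (nonZeroDivisors R) p
    refine ⟨d, nonZeroDivisors.ne_zero hd,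
      IsLocalization.integerNormalization (nonZeroDivisors R) p, hι ?_⟩
    rw [← aeval_algHom_apply, ← hmap, hq, map_smul, ← hp, ← algebraMap_smul F d p, map_smul,
      algebraMap_smul]
  choose dd hdd q hq using hden2
  let d : R := ∏ a ∈ S, dd a
  have hd : d ≠ 0 := Finset.prod_ne_zero_iff.mpr fun a _ => hdd a
  let e : R := d * a0
  have he : e ≠ 0 := mul_ne_zero hd ha0'
  let h : R := e * a0
  have hh : h ≠ 0 := mul_ne_zero he ha0'
  let G : R[X] := 1 + C e * X * g.divX.comp (C h * X)
  have hG : C a0 * G = g.comp (C h * X) := by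
    conv_rhs => rw [← divX_mul_X_add g]
    simp only [add_comp, mul_comp, X_comp, C_comp, G, h, map_mul]
    ring
  have hGprim : G.IsPrimitive := by
    intro r hr
    obtain ⟨t, ht⟩ := hr
    have h1 : G.coeff 0 = 1 := by simp [G, mul_coeff_zero]
    rw [ht, mul_coeff_zero, coeff_C_zero] at h1
    exact IsUnit.of_mul_eq_one _ h1
  refine ⟨h, G, hh, ?_⟩
  intro L _ _ _ _ _
  have hu : IsUnit (algebraMap R L h) := by
    rw [IsScalarTower.algebraMap_apply R A L]
    exact IsLocalization.Away.algebraMap_isUnit _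
  have hu' : IsUnit (algebraMap R L e) ∧ IsUnit (algebraMap R L a0) := by
    rw [show h = e * a0 from rfl, map_mul] at hu
    exact isUnit_of_mul_isUnit_left hu |> fun x => ⟨x, isUnit_of_mul_isUnit_right hu⟩
  obtain ⟨v, hv⟩ := hu.exists_left_inv
  let z : L := v * algebraMap A L y
  have hz : algebraMap R L h * z = algebraMap A L y := by
    rw [← mul_assoc, mul_comm _ v, hv, one_mul]
  let φ : R[X] →ₐ[R] L := aeval z
  have hφc : ∀ p : R[X], φ (p.comp (C h * X)) = algebraMap A L (aeval y p) := by
    intro p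
    simp only [φ, aeval_comp, map_mul, aeval_C, aeval_X, hz]
    exact aeval_algebraMap_apply L y p
  have hφG : φ G = 0 := by
    apply hu'.2.mul_left_cancel
    rw [mul_zero]
    have := hφc g
    rw [← hG, hgy, map_zero, map_mul] at this
    simpa [φ] using this
  have hker : RingHom.ker φ = Ideal.span {G} := by
    apply le_antisymm
    · intro P hP
      rw [Ideal.mem_span_singleton]
      let : NormalizedGCDMonoid R := Classical.choice inferInstance
      refine hGprim.dvd_of_fraction_map_dvd_fraction_map (K := F) ?_
      have hhF : algebraMap R F h ≠ 0 := by simpa using hh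
      have huK : IsUnit (ι (algebraMap R A h)) := by
        rw [AlgHom.commutes, IsScalarTower.algebraMap_apply R F K]
        exact (IsUnit.mk0 _ hhF).map _
      let ψ : L →+* K := IsLocalization.Away.lift (algebraMap R A h) (g := (ι : A →+* K)) huK
      have hψ : ∀ a, ψ (algebraMap A L a) = ι a := fun a => IsLocalization.Away.lift_eq _ _ a
      have hψR : ψ.comp (algebraMap R L) = algebraMap R K := by
        ext r
        rw [RingHom.comp_apply, IsScalarTower.algebraMap_apply R A L, hψ, AlgHom.commutes]
      have h1 : ψ (φ P) = aeval (ψ z) P := by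
        simp only [φ, aeval_def, hom_eval₂, hψR]
      have hP' : φ P = 0 := hP
      rw [hP', map_zero] at h1
      have hψz : ψ z = aeval (ι y) (C (algebraMap R F h)⁻¹ * X) := by
        have h2 : ψ (algebraMap R L h * z) = ι y := by rw [hz, hψ]
        rw [map_mul, ← RingHom.comp_apply, hψR, IsScalarTower.algebraMap_apply R F K] at h2
        rw [map_mul (aeval (ι y)), aeval_C, aeval_X, ← h2, ← mul_assoc, ← map_mul, inv_mul_cancel₀ hhF, map_one,
          one_mul]
      rw [← hmap, hψz, ← aeval_comp] at h1
      have h3 := minpoly.dvd F (ι y) h1.symm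
      have h4 : g.map (algebraMap R F) ∣
          (P.map (algebraMap R F)).comp (C (algebraMap R F h)⁻¹ * X) := by
        rw [hgb']
        exact (isUnit_C.mpr (IsUnit.mk0 _ hb0)).mul_left_dvd.mpr h3
      obtain ⟨w, hw⟩ := h4
      have h5 := congrArg (fun p => p.comp (C (algebraMap R F h) * X)) hw
      simp only [comp_assoc, mul_comp, C_comp, X_comp] at h5
      rw [← mul_assoc, ← C_mul, inv_mul_cancel₀ hhF, C_1, one_mul, comp_X] at h5
      have h6 : (g.map (algebraMap R F)).comp (C (algebraMap R F h) * X) =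
          C (algebraMap R F a0) * G.map (algebraMap R F) := by
        rw [← map_C (f := algebraMap R F) (a := a0), ← Polynomial.map_mul, hG, map_comp]; simp
      rw [h5, h6]
      exact ⟨C (algebraMap R F a0) * w.comp (C (algebraMap R F h) * X), by ring⟩
    · rw [Ideal.span_singleton_le_iff_mem]
      exact hφG
  have hsurj : Function.Surjective φ := by
    rw [← AlgHom.range_eq_top, eq_top_iff]
    have hyr : algebraMap A L y ∈ φ.range := by
      rw [← hz]
      exact mul_mem (φ.range.algebraMap_mem h) ⟨X, by simp [φ]⟩
    -- inverse of e
    obtain ⟨w, hwr, hw⟩ : ∃ w ∈ φ.range, algebraMap R L e * w = 1 := by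
      refine ⟨- φ (X * g.divX.comp (C h * X)), neg_mem ⟨_, rfl⟩, ?_⟩
      have : φ G = 1 + algebraMap R L e * φ (X * g.divX.comp (C h * X)) := by
        simp [G, φ, mul_assoc]
      rw [hφG] at this
      rw [mul_neg]
      linear_combination this
    have hunit : ∀ r s : R, r * s = e → ∃ w ∈ φ.range, algebraMap R L r * w = 1 := by
      intro r s hrs
      refine ⟨algebraMap R L s * w, mul_mem (φ.range.algebraMap_mem s) hwr, ?_⟩
      rw [← mul_assoc, ← map_mul, hrs, hw]
    have hAr : ∀ a : A, algebraMap A L a ∈ φ.range := by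
      have hle : Algebra.adjoin R (S : Set A) ≤ φ.range.comap (IsScalarTower.toAlgHom R A L) := by
        rw [Algebra.adjoin_le_iff]
        intro a ha
        change algebraMap A L a ∈ φ.range
        obtain ⟨w', hw'r, hw'⟩ := hunit (dd a) ((∏ x ∈ S.erase a, dd x) * a0) (by
          rw [← mul_assoc, Finset.mul_prod_erase S dd ha])
        have h1 : algebraMap A L a = w' * algebraMap A L (aeval y (q a)) := by
          rw [← hq a, Algebra.smul_def, map_mul, ← IsScalarTower.algebraMap_apply, ← mul_assoc,
            mul_comm w', hw', one_mul]
        rw [h1, ← hφc]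
        exact mul_mem hw'r ⟨_, rfl⟩
      intro a
      exact hle (hS ▸ Algebra.mem_top : a ∈ Algebra.adjoin R (S : Set A))
    intro x _
    obtain ⟨n, a, hx⟩ := IsLocalization.Away.surj (algebraMap R A h) x
    obtain ⟨w1, hw1r, hw1⟩ := hunit e 1 (mul_one _)
    obtain ⟨w2, hw2r, hw2⟩ := hunit a0 d (mul_comm _ _)
    have hhw : algebraMap R L h * (w1 * w2) = 1 := by
      rw [show h = e * a0 from rfl, map_mul]
      linear_combination algebraMap R L a0 * w2 * hw1 + hw2
    have hx2 : x = algebraMap A L a * (w1 * w2) ^ n := by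
      rw [← hx, ← IsScalarTower.algebraMap_apply, mul_assoc, ← mul_pow, hhw, one_pow, mul_one]
    rw [hx2]
    exact mul_mem (hAr a) (pow_mem (mul_mem hw1r hw2r) n)
  refine ⟨?_⟩
  exact ((Ideal.quotientEquivAlgOfEq R hker.symm).trans
    (Ideal.quotientKerAlgEquivOfSurjective hsurj)).symm


theorem alg_main (R A : Type) [CommRing R] [IsDomain R] [UniqueFactorizationMonoid R] [Infinite R]
    [CommRing A] [Algebra R A] [Algebra.Etale R A] :
    ∃ (h : R) (G : R[X]), h ≠ 0 ∧ ∀ (L : Type) [CommRing L] [Algebra A L] [Algebra R L]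
      [IsScalarTower R A L] [IsLocalization.Away (algebraMap R A h) L],
      Nonempty (L ≃ₐ[R] (R[X] ⧸ Ideal.span {G})) := by
  let F := FractionRing R
  have : Infinite F := Infinite.of_injective _ (IsFractionRing.injective R F)
  let K := TensorProduct R F A
  have : Module.Flat R A := inferInstance
  have : Algebra.Etale F K := inferInstance
  have : Module.Finite F K := Algebra.FormallyUnramified.finite_of_free F K
  exact core R A F K Algebra.TensorProduct.includeRight
    (Algebra.TensorProduct.includeRight_injective (IsFractionRing.injective R F))
    (exists_den R A) (exists_gen F K)



theorem height_max (k : Type) [Field k] (n : ℕ) (P : Ideal (MvPolynomial (Fin n) k))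
    [P.IsMaximal] : P.height = n := by
  induction n with
  | zero =>
    have h1 : IsField (MvPolynomial (Fin 0) k) :=
      (MvPolynomial.isEmptyAlgEquiv k (Fin 0)).toMulEquiv.isField (Field.toIsField k)
    have : P = ⊥ := by
      let := h1.toField
      exact (Ideal.eq_bot_or_top P).resolve_right (Ideal.IsMaximal.ne_top ‹_›)
    rw [this]
    simp
  | succ n ih =>
    let e := (MvPolynomial.finSuccEquiv k n).toRingEquiv
    let Q : Ideal (MvPolynomial (Fin n) k)[X] := P.map e
    have hQ : Q.IsMaximal := Ideal.map_isMaximal_of_equiv e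
    have h1 : Q.height = P.height := RingEquiv.height_map e P
    have h2 : (Q.comap (C : MvPolynomial (Fin n) k →+* _)).IsMaximal := Polynomial.isMaximal_comap_C_of_isJacobsonRing Q
    have h3 : Q.LiesOver (Q.comap (C : MvPolynomial (Fin n) k →+* _)) := ⟨rfl⟩
    rw [← h1, Polynomial.height_eq_height_add_one (Q.comap (C : MvPolynomial (Fin n) k →+* _)) Q, ih]
    simp

theorem series_etale (k : Type) [Field k] (n : ℕ) (A : Type) [CommRing A] [Nontrivial A]
    [Algebra (MvPolynomial (Fin n) k) A] [Algebra.Etale (MvPolynomial (Fin n) k) A] :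
    ∃ l : LTSeries (PrimeSpectrum A), l.length = n := by
  obtain ⟨M, hM⟩ := Ideal.exists_maximal A
  have hmax : (M.comap (algebraMap (MvPolynomial (Fin n) k) A)).IsMaximal := by
    let := Ideal.Quotient.field M
    have : Module.Finite (MvPolynomial (Fin n) k) (A ⧸ M) := finite_of_finite_type_of_isJacobsonRing _ _
    have h2 := Ideal.isMaximal_comap_of_isIntegral_of_isMaximal (R := MvPolynomial (Fin n) k) (⊥ : Ideal (A ⧸ M))
    have e : M.comap (algebraMap (MvPolynomial (Fin n) k) A) =
        (⊥ : Ideal (A ⧸ M)).comap (algebraMap (MvPolynomial (Fin n) k) (A ⧸ M)) := by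
      ext x
      rw [Ideal.mem_comap, Ideal.mem_comap, Ideal.mem_bot, IsScalarTower.algebraMap_apply _ A (A ⧸ M)]
      exact Ideal.Quotient.eq_zero_iff_mem.symm
    rw [e]; exact h2
  have hh := height_max k n (M.comap (algebraMap (MvPolynomial (Fin n) k) A))
  obtain ⟨l, hl, hl2⟩ := Ideal.exists_ltSeries_length_eq_height (M.comap (algebraMap (MvPolynomial (Fin n) k) A))
  rw [hh, Nat.cast_inj] at hl2
  have lo : M.LiesOver l.last.asIdeal := by rw [hl]; exact ⟨rfl⟩
  obtain ⟨l', hl', _⟩ := Ideal.exists_ltSeries_of_hasGoingDown l M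
  exact ⟨l', hl'.trans hl2⟩


theorem top_dim {X : Type} [TopologicalSpace X]
    (hX : ∀ T ∈ irreducibleComponents X, topologicalKrullDim T = 1)
    {Y : Type} [Preorder Y] (x : Y → X) (hx : ∀ a b : Y, a ≤ b ↔ x a ⤳ x b)
    (l : LTSeries Y) : l.length ≤ 1 := by
  set T := irreducibleComponent (x l.head) with hT
  have hcl : IsClosed T := isClosed_irreducibleComponent
  have h1 := hX T (irreducibleComponent_mem_irreducibleComponents _)
  have hmem : ∀ i, x (l i) ∈ T := fun i =>
    ((hx _ _).1 (LTSeries.head_le l i)).mem_closed hcl mem_irreducibleComponent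
  let F : Fin (l.length + 1) → IrreducibleCloseds T := fun i =>
    ⟨closure {⟨x (l i.rev), hmem _⟩}, isIrreducible_singleton.closure, isClosed_closure⟩
  have hF : StrictMono F := by
    intro i j hij
    have h3 : l j.rev < l i.rev := l.strictMono (Fin.rev_lt_rev.2 hij)
    rw [lt_iff_le_not_ge] at h3 ⊢
    have key : ∀ i j, F i ≤ F j ↔ l j.rev ≤ l i.rev := by
      intro i j
      rw [hx, ← SetLike.coe_subset_coe]
      exact specializes_iff_closure_subset.symm.trans (subtype_specializes_iff _ _)
    rw [key, key]
    exact h3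
  have := Order.LTSeries.length_le_krullDim (LTSeries.mk l.length F hF)
  change _ ≤ topologicalKrullDim T at this
  rw [h1] at this
  exact_mod_cast this

theorem top_iso {X : Type} [TopologicalSpace X] [JacobsonSpace X]
    (hX : ∀ T ∈ irreducibleComponents X, topologicalKrullDim T = 1)
    (x : X) (hx : IsOpen {x}) : False := by
  have hc : IsClosed {x} := isClosed_singleton_of_isLocallyClosed_singleton hx.isLocallyClosed
  have h1 := hX _ (irreducibleComponent_mem_irreducibleComponents x)
  have h2 : irreducibleComponent x ⊆ {x} :=
    isIrreducible_irreducibleComponent.isPreirreducible.isPreconnected.subset_isClopen ⟨hc, hx⟩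
      ⟨x, mem_irreducibleComponent, rfl⟩
  have : Subsingleton (irreducibleComponent x) :=
    Set.subsingleton_coe _ |>.2 (Set.subsingleton_singleton.anti h2)
  have h3 := topologicalKrullDim_zero_of_discreteTopology (irreducibleComponent x)
  rw [h1] at h3
  exact absurd h3 (by decide)


structure Chart {k : Type} [Field k] {X : Scheme.{0}} (s : X ⟶ Spec (CommRingCat.of k)) where
  Y : Scheme.{0}
  aff : IsAffine Y
  j : Y ⟶ X
  oi : IsOpenImmersion j
  f : Y ⟶ Spec (CommRingCat.of k[X])
  et : Etale f
  comm : f ≫ Spec.map (CommRingCat.ofHom (C : k →+* k[X])) = j ≫ s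
attribute [instance] Chart.aff Chart.oi Chart.et

def Chart.U {k : Type} [Field k] {X : Scheme.{0}} {s : X ⟶ Spec (CommRingCat.of k)} (c : Chart s) :
  X.Opens := c.j.opensRange

open Limits in
theorem Chart.union {k : Type} [Field k] {X : Scheme.{0}} {s : X ⟶ Spec (CommRingCat.of k)}
    (a b : Chart s) (hab : Disjoint a.U b.U) : ∃ c : Chart s, c.U = a.U ⊔ b.U := by
  let c : Bool → Chart s := fun i => cond i a b
  have hc : ∀ i, IsAffine (c i).Y := fun i => (c i).aff
  have hoi := isOpenImmersion_sigmaDesc _ (fun i ↦ (c i).j) (by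
    intro i j e
    have h1 : Disjoint (Set.range a.j) (Set.range b.j) := by
      have := hab
      rw [← Opens.coe_disjoint] at this
      exact this
    cases i <;> cases j
    · exact absurd rfl e
    · exact h1.symm
    · exact h1
    · exact absurd rfl e)
  have : IsZariskiLocalAtSource @Etale.{0} :=
    HasRingHomProperty.instIsZariskiLocalAtSource (Q := RingHom.Etale)
  refine ⟨⟨∐ fun i => (c i).Y, inferInstance, Sigma.desc fun i => (c i).j, hoi,
    Sigma.desc fun i => (c i).f, IsZariskiLocalAtSource.sigmaDesc fun i => (c i).et, ?_⟩, ?_⟩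
  · ext1 i
    simp [(c i).comm]
  · ext x
    have h1 : x ∈ Set.range (Sigma.desc fun i => (c i).j) ↔ ∃ i, x ∈ Set.range (c i).j := by
      constructor
      · rintro ⟨y, rfl⟩
        obtain ⟨⟨i, y⟩, rfl⟩ := (sigmaMk _).surjective y
        refine ⟨i, y, ?_⟩
        rw [sigmaMk_mk, ← Scheme.Hom.comp_apply, Sigma.ι_desc]
      · rintro ⟨i, y, rfl⟩
        refine ⟨Sigma.ι (fun i => (c i).Y) i y, ?_⟩
        rw [← Scheme.Hom.comp_apply, Sigma.ι_desc]
    refine h1.trans ?_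
    rw [Bool.exists_bool, or_comm]
    rfl

theorem Chart.empty {k : Type} [Field k] {X : Scheme.{0}} (s : X ⟶ Spec (CommRingCat.of k)) :
   Nonempty (Chart s) := by
  refine ⟨⟨∅, inferInstance, Scheme.emptyTo _, inferInstance, Scheme.emptyTo _, inferInstance, ?_⟩⟩
  exact Limits.IsInitial.hom_ext emptyIsInitial _ _


theorem n_eq_one {k : Type} [Field k] {X : Scheme.{0}} [JacobsonSpace X]
    (hX : ∀ T ∈ irreducibleComponents (X : Type), topologicalKrullDim T = 1)
    (A : CommRingCat.{0}) [Nontrivial A] (j : Spec A ⟶ X) [IsOpenImmersion j] (n : ℕ)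
    (g : MvPolynomial (Fin n) k →+* A) (hg : g.Etale) : n = 1 := by
  apply le_antisymm
  · let := g.toAlgebra
    have : Algebra.Etale (MvPolynomial (Fin n) k) A := hg
    obtain ⟨l, hl⟩ := series_etale k n A
    rw [← hl]
    refine top_dim hX (fun p : PrimeSpectrum A => j p) (fun a b => ?_) l
    exact (PrimeSpectrum.le_iff_specializes a b).trans
      (j.isOpenEmbedding.isInducing.specializes_iff (x := a) (y := b)).symm
  · by_contra h
    obtain rfl : n = 0 := by omega
    have h1 : (g.comp MvPolynomial.C).Etale := by
      refine RingHom.Etale.stableUnderComposition _ _ ?_ hg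
      exact RingHom.Etale.of_bijective (MvPolynomial.isEmptyAlgEquiv k (Fin 0)).symm.bijective
    let := (g.comp MvPolynomial.C).toAlgebra
    have : Algebra.Etale k A := h1
    have : Module.Finite k A := Algebra.FormallyUnramified.finite_of_free k A
    have : IsArtinianRing A := IsArtinianRing.of_finite k A
    have : DiscreteTopology (Spec A) := inferInstanceAs (DiscreteTopology (PrimeSpectrum A))
    obtain ⟨p⟩ : Nonempty (PrimeSpectrum A) := inferInstance
    refine top_iso hX (j p) ?_
    have := j.isOpenEmbedding.isOpenMap {p} (isOpen_discrete _)
    exact (Set.image_singleton (f := j) (a := p)) ▸ this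


theorem Chart.of_ring {k : Type} [Field k] {X : Scheme.{0}} (s : X ⟶ Spec (CommRingCat.of k))
    [JacobsonSpace X] (hX : ∀ T ∈ irreducibleComponents (X : Type), topologicalKrullDim T = 1)
    (A : CommRingCat.{0}) [Nontrivial A] (j : Spec A ⟶ X) [IsOpenImmersion j]
    (φ : CommRingCat.of k ⟶ A) (hφ : Spec.map φ = j ≫ s) (hφs : φ.hom.IsStandardSmooth) :
    ∃ c : Chart s, c.U = j.opensRange := by
  obtain ⟨n, g, hgC, hg⟩ := hφs.exists_etale_mvPolynomial
  obtain rfl := n_eq_one hX A j n g hg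
  let ψ : k[X] →+* A := g.comp (MvPolynomial.uniqueAlgEquiv k (Fin 1)).symm.toRingEquiv.toRingHom
  have hψ : ψ.Etale := RingHom.Etale.respectsIso.2 _ _ hg
  have hψC : CommRingCat.ofHom (C : k →+* k[X]) ≫ CommRingCat.ofHom ψ = φ := by
    ext r
    have := DFunLike.congr_fun hgC r
    refine Eq.trans ?_ this
    change g ((MvPolynomial.uniqueAlgEquiv k (Fin 1)).symm (algebraMap k k[X] r)) = _
    rw [AlgEquiv.commutes]
    rfl
  refine ⟨⟨Spec A, inferInstance, j, inferInstance, Spec.map (CommRingCat.ofHom ψ), ?_, ?_⟩, rfl⟩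
  · rw [HasRingHomProperty.Spec_iff (P := @Etale)]; exact hψ
  · rw [← Spec.map_comp, hψC, hφ]

theorem Chart.exists_le {k : Type} [Field k] {X : Scheme.{0}} (s : X ⟶ Spec (CommRingCat.of k))
    [Smooth s] (hX : ∀ T ∈ irreducibleComponents (X : Type), topologicalKrullDim T = 1)
    (V : X.Opens) (x : X) (hx : x ∈ V) : ∃ c : Chart s, c.U ≤ V ∧ ∃ y, y ∈ c.U := by
  have hJ : JacobsonSpace X := by
    have : JacobsonSpace (Spec (CommRingCat.of k)) :=
      PrimeSpectrum.isJacobsonRing_iff_jacobsonSpace.mp (inferInstanceAs (IsJacobsonRing k))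
    exact LocallyOfFiniteType.jacobsonSpace s
  obtain ⟨U, hU, W, hW, hxW, e, hss⟩ := Smooth.exists_isStandardSmooth (V.ι ≫ s) ⟨x, hx⟩
  have hUtop : U = ⊤ := by
    rw [eq_top_iff]
    rintro y -
    have := e hxW
    have : Subsingleton (Spec (CommRingCat.of k)) := inferInstanceAs (Subsingleton (PrimeSpectrum k))
    rwa [Subsingleton.elim y]
  have hiso : IsIso hU.fromSpec := by
    apply isIso_of_isOpenImmersion_of_opensRange_eq_top
    rw [hU.opensRange_fromSpec, hUtop]
  let e0 := Spec.preimage hU.fromSpec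
  have he0 : Spec.map e0 = hU.fromSpec := Spec.map_preimage _
  have : IsIso (Spec.map e0) := by rw [he0]; exact hiso
  have : IsIso e0 := by
    have : IsIso (Scheme.Spec.map e0.op) := this
    have := isIso_of_reflects_iso e0.op Scheme.Spec
    exact isIso_of_op e0
  let A := Γ(V, W)
  let φ : CommRingCat.of k ⟶ A := e0 ≫ (V.ι ≫ s).appLE U W e
  let j : Spec A ⟶ X := hW.fromSpec ≫ V.ι
  have hφ : Spec.map φ = j ≫ s := by
    simp only [φ, j, Spec.map_comp, he0, Category.assoc]
    exact IsAffineOpen.SpecMap_appLE_fromSpec _ hU hW e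
  have hφs : φ.hom.IsStandardSmooth :=
    RingHom.isStandardSmooth_respectsIso.2 _ (asIso e0).commRingCatIsoToRingEquiv hss
  have hxj : x ∈ Set.range j := by
    have : (⟨x, hx⟩ : V) ∈ Set.range hW.fromSpec := by
      rw [hW.range_fromSpec]; exact hxW
    obtain ⟨y, hy⟩ := this
    refine ⟨y, ?_⟩
    simp only [j]
    rw [Scheme.Hom.comp_apply, hy]
    rfl
  obtain ⟨y, hy⟩ := hxj
  have : Nontrivial A := PrimeSpectrum.nonempty_iff_nontrivial.1 ⟨y⟩
  obtain ⟨c, hc⟩ := Chart.of_ring s hX A j φ hφ hφs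
  refine ⟨c, ?_, x, ?_⟩
  · rw [hc]
    rintro _ ⟨y, rfl⟩
    simp only [j]
    rw [Scheme.Hom.comp_apply]
    exact Subtype.prop _
  · rw [hc]
    exact ⟨y, hy⟩



theorem Chart.exists_dense {k : Type} [Field k] {X : Scheme.{0}} (s : X ⟶ Spec (CommRingCat.of k))
    [Smooth s] [CompactSpace X]
    (hX : ∀ T ∈ irreducibleComponents (X : Type), topologicalKrullDim T = 1) :
    ∃ c : Chart s, Dense (c.U : Set X) := by
  have : IsLocallyNoetherian X := LocallyOfFiniteType.isLocallyNoetherian s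
  have : IsNoetherian X := {}
  have hwf : WellFounded ((· > ·) : X.Opens → X.Opens → Prop) :=
    wellFounded_gt
  obtain ⟨c0⟩ := Chart.empty s
  obtain ⟨_, ⟨c, rfl⟩, hc⟩ := hwf.has_min (Set.range (Chart.U (s := s))) ⟨_, c0, rfl⟩
  refine ⟨c, ?_⟩
  by_contra hd
  rw [dense_iff_closure_eq] at hd
  obtain ⟨x, hx⟩ := (Set.ne_univ_iff_exists_notMem _).1 hd
  let V : X.Opens := ⟨(closure (c.U : Set X))ᶜ, isClosed_closure.isOpen_compl⟩
  obtain ⟨d, hdV, y, hy⟩ := Chart.exists_le s hX V x hx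
  have hdis : Disjoint c.U d.U := by
    rw [← Opens.coe_disjoint]
    exact Set.disjoint_left.2 fun z hz hz' => hdV hz' (subset_closure hz)
  obtain ⟨u, hu⟩ := Chart.union c d hdis
  refine hc _ ⟨u, rfl⟩ ?_
  rw [hu]
  refine lt_of_le_of_ne le_sup_left fun h => ?_
  have : y ∈ c.U := by rw [h]; exact Or.inr hy
  exact hdV hy (subset_closure this)

theorem alg_plane (k A : Type) [Field k] [CommRing A] [Algebra k[X] A] [Algebra.Etale k[X] A] :
    ∃ (h : k[X]) (g : MvPolynomial (Fin 2) k)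
      (e : Localization.Away (algebraMap k[X] A h) ≃+* (MvPolynomial (Fin 2) k ⧸ Ideal.span {g})),
      h ≠ 0 ∧ e.toRingHom.comp ((algebraMap A (Localization.Away (algebraMap k[X] A h))).comp
        ((algebraMap k[X] A).comp C)) = algebraMap k _ := by
  obtain ⟨h, G, h0, H⟩ := alg_main k[X] A
  obtain ⟨e1⟩ := H (Localization.Away (algebraMap k[X] A h))
  let E : k[X][X] ≃ₐ[k] MvPolynomial (Fin 2) k :=
    ((MvPolynomial.finSuccEquiv k 1).trans
      (Polynomial.mapAlgEquiv (MvPolynomial.uniqueAlgEquiv k (Fin 1)))).symm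
  let e2 : (k[X][X] ⧸ Ideal.span {G}) ≃ₐ[k] (MvPolynomial (Fin 2) k ⧸ Ideal.span {E G}) :=
    Ideal.quotientEquivAlg _ _ E (by rw [Ideal.map_span, Set.image_singleton]; rfl)
  refine ⟨h, E G, e1.toRingEquiv.trans e2.toRingEquiv, h0, ?_⟩
  ext r
  have h1 : e1 (algebraMap A (Localization.Away (algebraMap k[X] A h)) (algebraMap k[X] A (C r))) =
     algebraMap k _ r := by
    rw [← IsScalarTower.algebraMap_apply, AlgEquiv.commutes]
    rfl
  change e2 (e1 _) = _
  simp only [RingHom.comp_apply]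
  rw [h1, AlgEquiv.commutes]

theorem alg_dense (k A : Type) [Field k] [CommRing A] [Algebra k[X] A] [Algebra.Etale k[X] A]
    (h : k[X]) (h0 : h ≠ 0) :
    DenseRange (PrimeSpectrum.comap (algebraMap A (Localization.Away (algebraMap k[X] A h)))) := by
  rw [PrimeSpectrum.denseRange_comap_iff_ker_le_nilRadical]
  have : Function.Injective (algebraMap A (Localization.Away (algebraMap k[X] A h))) := by
    apply IsLocalization.injective _ (M := Submonoid.powers (algebraMap k[X] A h))
    rw [Submonoid.powers_le]
    have : Module.Flat k[X] A := inferInstance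
    have : Module.IsTorsionFree k[X] A := inferInstance
    rw [mem_nonZeroDivisors_iff_right]
    intro z hz
    rw [mul_comm, ← Algebra.smul_def] at hz
    exact (smul_eq_zero.1 hz).resolve_left h0
  rw [(RingHom.injective_iff_ker_eq_bot _).1 this]
  exact bot_le

theorem main_aux (k : Type) [Field k] {X : Scheme.{0}} (s : X ⟶ Spec (CommRingCat.of k))
    [Smooth s] [CompactSpace X]
    (hX : ∀ T ∈ irreducibleComponents (X : Type), topologicalKrullDim T = 1) :
    ∃ (U : X.Opens) (g : MvPolynomial (Fin 2) k),
      Dense (U : Set X) ∧ IsAffine U.toScheme ∧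
      Smooth (Spec.map (CommRingCat.ofHom
        (algebraMap k (MvPolynomial (Fin 2) k ⧸ Ideal.span {g})))) ∧
      Nonempty (U.toScheme ≅
        Spec (CommRingCat.of (MvPolynomial (Fin 2) k ⧸ Ideal.span {g}))) := by
  obtain ⟨c, hc⟩ := Chart.exists_dense s hX
  let A := Γ(c.Y, ⊤)
  let j : Spec A ⟶ X := c.Y.isoSpec.inv ≫ c.j
  let f : Spec A ⟶ Spec (CommRingCat.of k[X]) := c.Y.isoSpec.inv ≫ c.f
  have hf : f ≫ Spec.map (CommRingCat.ofHom (C : k →+* k[X])) = j ≫ s := by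
    simp only [f, j, Category.assoc, c.comm]
  have hfe : Etale f := inferInstance
  have hjd : DenseRange j := by
    have : (j.opensRange : Set X) = c.U := by
      simp only [j, Scheme.Hom.opensRange_comp_of_isIso]; rfl
    change Dense (j.opensRange : Set X)
    rw [this]; exact hc
  obtain ⟨ψ, hψ⟩ : ∃ ψ : CommRingCat.of k[X] ⟶ A, Spec.map ψ = f := ⟨_, Spec.map_preimage _⟩
  have hψe : ψ.hom.Etale := by
    rw [← HasRingHomProperty.Spec_iff (P := @Etale), hψ]; exact hfe
  have hj : IsOpenImmersion j := inferInstance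
  clear_value j f
  clear_value A
  let := ψ.hom.toAlgebra
  have : Algebra.Etale k[X] A := hψe
  obtain ⟨h, g, e, h0, he⟩ := alg_plane k A
  have hd := alg_dense k A h h0
  let L := Localization.Away (algebraMap k[X] A h)
  let i : Spec (CommRingCat.of L) ⟶ Spec A := Spec.map (CommRingCat.ofHom (algebraMap A L))
  have hi : IsOpenImmersion i := IsOpenImmersion.of_isLocalization (algebraMap k[X] A h)
  let ε : Spec (CommRingCat.of (MvPolynomial (Fin 2) k ⧸ Ideal.span {g})) ≅ Spec (CommRingCat.of L) :=
    Scheme.Spec.mapIso e.toCommRingCatIso.op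
  have hε : ε.hom = Spec.map (CommRingCat.ofHom e.toRingHom) := rfl
  let J := i ≫ j
  refine ⟨J.opensRange, g, ?_, isAffineOpen_opensRange J, ?_, ⟨J.isoOpensRange.symm ≪≫ ε.symm⟩⟩
  · have h1 : DenseRange (j ∘ i) := hjd.comp hd j.continuous
    have h2 : (J.opensRange : Set X) = Set.range (j ∘ i) := by
      simp [J]
    rw [h2]; exact h1
  · have h1 : Spec.map (CommRingCat.ofHom
        (algebraMap k (MvPolynomial (Fin 2) k ⧸ Ideal.span {g}))) = ε.hom ≫ J ≫ s := by
      rw [← he]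
      simp only [J, Category.assoc, ← hf, ← hψ, hε, i, ← Spec.map_comp]
      rfl
    rw [h1]
    infer_instance

/-- **Corollary A.4** of the paper.  Every smooth projective curve over a
perfect field `k` has a dense affine open subscheme which is isomorphic to a
smooth affine plane curve, i.e. to a smooth closed subscheme of `𝔸²_k`
defined by a single polynomial equation. -/
theorem exists_dense_open_smooth_plane_curve
    (k : Type) [Field k] [PerfectField k] (Z : SmoothProjCurve k) :
    ∃ (U : Z.X.Opens) (g : MvPolynomial (Fin 2) k),
      Dense (U : Set Z.X) ∧ IsAffine U.toScheme ∧
      IsSmooth (Spec.map (CommRingCat.ofHom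
        (algebraMap k (MvPolynomial (Fin 2) k ⧸ Ideal.span {g})))) ∧
      Nonempty (U.toScheme ≅
        Spec (CommRingCat.of (MvPolynomial (Fin 2) k ⧸ Ideal.span {g}))) := by
  have h1 : Smooth Z.structMap := Z.smooth
  have h2 : IsProper Z.structMap := Z.proper
  have h3 : CompactSpace Z.X := by
    have h5 : CompactSpace (SpecOf k) := inferInstanceAs (CompactSpace (PrimeSpectrum k))
    exact QuasiCompact.compactSpace_of_compactSpace Z.structMap
  exact main_aux k Z.structMap Z.isCurve

end BakerModels
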